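/- Let 𝒲₁ and 𝒲₂ be weakly exact structures on an additive category 𝒜, both contained in a weakly exact structure 𝒱 (for instance 𝒱 the maximal exact structure). Define 𝒲₁ + 𝒲₂ to be the class of all kernel–cokernel pairs isomorphic to a Baer sum η₁ + η₂ := ∇_A (η₁ ⊕ η₂) Δ_C where, for some objects A and C, η₁ ∈ 𝒲₁ and η₂ ∈ 𝒲₂ are pairs from A to C. Then: (a) 𝒲₁ + 𝒲₂ is a weakly exact structure on 𝒜; and (b) 𝒲₁ + 𝒲₂ is the join of 𝒲₁ and 𝒲₂, i.e. it contains 𝒲₁ and 𝒲₂ and is contained in every weakly exact structure containing both 𝒲₁ and 𝒲₂. -/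

import Mathlib

open CategoryTheory CategoryTheory.Limits ZeroObject

universe w v u

namespace WeaklyExactPaper

section Preamble

variable {C : Type u} [Category.{v} C] [Preadditive C] [HasZeroObject C] [HasBinaryBiproducts C]

/-- `(i, d)` is a kernel–cokernel pair: `i` is a kernel of `d` and `d` is a cokernel of `i`. -/
structure IsKernelCokernelPair {A B Z : C} (i : A ⟶ B) (d : B ⟶ Z) : Prop where
  w : i ≫ d = 0
  isKernel : Nonempty (IsLimit (KernelFork.ofι i w))
  isCokernel : Nonempty (IsColimit (CokernelCofork.ofπ d w))

/-- Isomorphism of composable pairs `(i, d) ≅ (i', d')`. -/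
def PairIso {A B Z A' B' Z' : C} (i : A ⟶ B) (d : B ⟶ Z) (i' : A' ⟶ B') (d' : B' ⟶ Z') : Prop :=
  ∃ (eA : A ≅ A') (eB : B ≅ B') (eZ : Z ≅ Z'),
    i ≫ eB.hom = eA.hom ≫ i' ∧ d ≫ eZ.hom = eB.hom ≫ d'

/-- `f` is a kernel of some morphism. -/
def IsSomeKernel {A B : C} (f : A ⟶ B) : Prop :=
  ∃ (Z : C) (g : B ⟶ Z) (w : f ≫ g = 0), Nonempty (IsLimit (KernelFork.ofι f w))

/-- `g` is a cokernel of some morphism. -/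
def IsSomeCokernel {B Z : C} (g : B ⟶ Z) : Prop :=
  ∃ (A : C) (f : A ⟶ B) (w : f ≫ g = 0), Nonempty (IsColimit (CokernelCofork.ofπ g w))

/-- `f` admits a cokernel. -/
def AdmitsCokernel {A B : C} (f : A ⟶ B) : Prop :=
  ∃ (Z : C) (g : B ⟶ Z) (w : f ≫ g = 0), Nonempty (IsColimit (CokernelCofork.ofπ g w))

/-- `g` admits a kernel. -/
def AdmitsKernel {B Z : C} (g : B ⟶ Z) : Prop :=
  ∃ (A : C) (f : A ⟶ B) (w : f ≫ g = 0), Nonempty (IsLimit (KernelFork.ofι f w))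

/-- A weakly exact structure on an additive category: a class of kernel–cokernel pairs,
closed under isomorphisms of composable pairs and binary direct sums, containing the pairs
`(1_X, X ⟶ 0)` and `(0 ⟶ X, 1_X)`, and satisfying the pushout axiom (E2) and the
pullback axiom (E2)ᵒᵖ. -/
structure WeaklyExactStructure (C : Type u) [Category.{v} C] [Preadditive C]
    [HasZeroObject C] [HasBinaryBiproducts C] where
  W : ∀ ⦃A B Z : C⦄, (A ⟶ B) → (B ⟶ Z) → Prop
  kc_of_mem : ∀ {A B Z : C} {i : A ⟶ B} {d : B ⟶ Z}, W i d → IsKernelCokernelPair i d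
  iso_closed : ∀ {A B Z A' B' Z' : C} {i : A ⟶ B} {d : B ⟶ Z} {i' : A' ⟶ B'} {d' : B' ⟶ Z'},
    W i d → PairIso i d i' d' → W i' d'
  sum_mem : ∀ {A₁ B₁ Z₁ A₂ B₂ Z₂ : C} {i₁ : A₁ ⟶ B₁} {d₁ : B₁ ⟶ Z₁} {i₂ : A₂ ⟶ B₂}
    {d₂ : B₂ ⟶ Z₂}, W i₁ d₁ → W i₂ d₂ → W (biprod.map i₁ i₂) (biprod.map d₁ d₂)
  id_zero_mem : ∀ X : C, W (𝟙 X) (0 : X ⟶ (0 : C))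
  zero_id_mem : ∀ X : C, W (0 : (0 : C) ⟶ X) (𝟙 X)
  pushout_mem : ∀ {A B Z A' : C} {i : A ⟶ B} {d : B ⟶ Z}, W i d → ∀ t : A ⟶ A',
    ∃ (S : C) (g : B ⟶ S) (i' : A' ⟶ S), IsPushout i t g i' ∧ ∃ (Z' : C) (d' : S ⟶ Z'), W i' d'
  pullback_mem : ∀ {A B Z D : C} {i : A ⟶ B} {d : B ⟶ Z}, W i d → ∀ t : D ⟶ Z,
    ∃ (P : C) (p : P ⟶ B) (q : P ⟶ D), IsPullback p q d t ∧ ∃ (A'' : C) (i'' : A'' ⟶ P), W i'' q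

/-- `i` is an admissible monic of `𝒲`. -/
def AdmissibleMonic (𝒲 : WeaklyExactStructure C) {A B : C} (i : A ⟶ B) : Prop :=
  ∃ (Z : C) (d : B ⟶ Z), 𝒲.W i d

/-- `d` is an admissible epic of `𝒲`. -/
def AdmissibleEpic (𝒲 : WeaklyExactStructure C) {B Z : C} (d : B ⟶ Z) : Prop :=
  ∃ (A : C) (i : A ⟶ B), 𝒲.W i d

/-- `(i, d)` is a split kernel–cokernel pair. -/
def IsSplitPair {A B Z : C} (i : A ⟶ B) (d : B ⟶ Z) : Prop :=
  ∃ (X Y : C), PairIso (biprod.inl : X ⟶ X ⊞ Y) (biprod.snd : X ⊞ Y ⟶ Y) i d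

end Preamble

section Statement

variable {C : Type u} [Category.{v} C] [Preadditive C] [HasZeroObject C] [HasBinaryBiproducts C]

/-- `(i₃, d₃)` is a Baer sum of a pair of `𝒲₁` and a pair of `𝒲₂` with the same end terms:
it is obtained from the direct sum pair by a pullback along the diagonal followed by a
pushout along the codiagonal. -/
def IsBaerSum (𝒲₁ 𝒲₂ : WeaklyExactStructure C) {A S Z : C}
    (i₃ : A ⟶ S) (d₃ : S ⟶ Z) : Prop :=
  ∃ (B₁ B₂ : C) (i₁ : A ⟶ B₁) (d₁ : B₁ ⟶ Z) (i₂ : A ⟶ B₂) (d₂ : B₂ ⟶ Z),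
    𝒲₁.W i₁ d₁ ∧ 𝒲₂.W i₂ d₂ ∧
    ∃ (P : C) (p : P ⟶ B₁ ⊞ B₂) (dP : P ⟶ Z) (iP : A ⊞ A ⟶ P) (g : P ⟶ S),
      IsPullback p dP (biprod.map d₁ d₂) (biprod.lift (𝟙 Z) (𝟙 Z)) ∧
      iP ≫ p = biprod.map i₁ i₂ ∧ iP ≫ dP = 0 ∧
      IsPushout iP (biprod.desc (𝟙 A) (𝟙 A)) g i₃ ∧
      g ≫ d₃ = dP ∧ i₃ ≫ d₃ = 0

section Helpers

lemma IsKernelCokernelPair.lift {A B Z : C} {i : A ⟶ B} {d : B ⟶ Z}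
    (h : IsKernelCokernelPair i d) {X : C} (f : X ⟶ B) (hf : f ≫ d = 0) :
    ∃ l : X ⟶ A, l ≫ i = f := by
  obtain ⟨hk⟩ := h.isKernel
  obtain ⟨l, hl⟩ := KernelFork.IsLimit.lift' hk f hf
  exact ⟨l, by simpa using hl⟩

lemma IsKernelCokernelPair.desc {A B Z : C} {i : A ⟶ B} {d : B ⟶ Z}
    (h : IsKernelCokernelPair i d) {X : C} (f : B ⟶ X) (hf : i ≫ f = 0) :
    ∃ l : Z ⟶ X, d ≫ l = f := by
  obtain ⟨hk⟩ := h.isCokernel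
  obtain ⟨l, hl⟩ := CokernelCofork.IsColimit.desc' hk f hf
  exact ⟨l, by simpa using hl⟩

lemma IsKernelCokernelPair.mono {A B Z : C} {i : A ⟶ B} {d : B ⟶ Z}
    (h : IsKernelCokernelPair i d) : Mono i := by
  obtain ⟨hk⟩ := h.isKernel
  exact mono_of_isLimit_fork hk

lemma IsKernelCokernelPair.epi {A B Z : C} {i : A ⟶ B} {d : B ⟶ Z}
    (h : IsKernelCokernelPair i d) : Epi d := by
  obtain ⟨hk⟩ := h.isCokernel
  exact epi_of_isColimit_cofork hk

lemma isPushout_of_exists {X Y Z P : C} {f : X ⟶ Y} {g : X ⟶ Z} {a : Y ⟶ P} {b : Z ⟶ P}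
    (w : f ≫ a = g ≫ b)
    (ex : ∀ {T : C} (u : Y ⟶ T) (v : Z ⟶ T), f ≫ u = g ≫ v → ∃ l : P ⟶ T, a ≫ l = u ∧ b ≫ l = v)
    (un : ∀ {T : C} (l m : P ⟶ T), a ≫ l = a ≫ m → b ≫ l = b ≫ m → l = m) :
    IsPushout f g a b := by
  refine ⟨⟨w⟩, ⟨PushoutCocone.IsColimit.mk w
    (fun s => (ex s.inl s.inr s.condition).choose)
    (fun s => (ex s.inl s.inr s.condition).choose_spec.1)
    (fun s => (ex s.inl s.inr s.condition).choose_spec.2) ?_⟩⟩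
  intro s m h1 h2
  exact un _ _ (h1.trans (ex s.inl s.inr s.condition).choose_spec.1.symm)
    (h2.trans (ex s.inl s.inr s.condition).choose_spec.2.symm)

lemma isPullback_of_exists {X Y Z P : C} {f : Y ⟶ X} {g : Z ⟶ X} {a : P ⟶ Y} {b : P ⟶ Z}
    (w : a ≫ f = b ≫ g)
    (ex : ∀ {T : C} (u : T ⟶ Y) (v : T ⟶ Z), u ≫ f = v ≫ g → ∃ l : T ⟶ P, l ≫ a = u ∧ l ≫ b = v)
    (un : ∀ {T : C} (l m : T ⟶ P), l ≫ a = m ≫ a → l ≫ b = m ≫ b → l = m) :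
    IsPullback a b f g := by
  refine ⟨⟨w⟩, ⟨PullbackCone.IsLimit.mk w
    (fun s => (ex s.fst s.snd s.condition).choose)
    (fun s => (ex s.fst s.snd s.condition).choose_spec.1)
    (fun s => (ex s.fst s.snd s.condition).choose_spec.2) ?_⟩⟩
  intro s m h1 h2
  exact un _ _ (h1.trans (ex s.fst s.snd s.condition).choose_spec.1.symm)
    (h2.trans (ex s.fst s.snd s.condition).choose_spec.2.symm)

/-- A morphism of pairs which is the identity on the right is a pushout. -/
lemma isPushout_of_mor (𝒲 : WeaklyExactStructure C) {A B Z A' B' : C} {i : A ⟶ B} {d : B ⟶ Z}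
    {i' : A' ⟶ B'} {d' : B' ⟶ Z} (h : 𝒲.W i d) (h' : IsKernelCokernelPair i' d')
    {t : A ⟶ A'} {g : B ⟶ B'} (w1 : i ≫ g = t ≫ i') (w2 : g ≫ d' = d) :
    IsPushout i t g i' := by
  obtain ⟨P, p, q, hP, A'', i'', hq⟩ := 𝒲.pullback_mem h d'
  have kq := 𝒲.kc_of_mem hq
  have kd := 𝒲.kc_of_mem h
  have := h'.mono
  have := kq.epi
  obtain ⟨k, hk1, hk2⟩ : ∃ k : B ⟶ P, k ≫ p = 𝟙 B ∧ k ≫ q = g :=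
    ⟨hP.lift (𝟙 B) g (by simp [w2]), by simp, by simp⟩
  obtain ⟨m, hm1, hm2⟩ : ∃ m : A' ⟶ P, m ≫ p = 0 ∧ m ≫ q = i' :=
    ⟨hP.lift 0 i' (by simp [h'.w]), by simp, by simp⟩
  obtain ⟨r, hr⟩ := h'.lift (q - p ≫ g) (by simp [w2, hP.w])
  obtain ⟨s, hs⟩ := kd.lift (i'' ≫ p) (by rw [Category.assoc, hP.w, reassoc_of% kq.w, zero_comp])
  have hsr : i'' ≫ r = - (s ≫ t) := by
    rw [← cancel_mono i', Category.assoc, hr, Preadditive.comp_sub, kq.w, ← Category.assoc, ← hs]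
    simp [w1]
  have hkr : k ≫ r = 0 := by
    rw [← cancel_mono i', Category.assoc, hr]; simp [hk2, reassoc_of% hk1]
  have hmr : m ≫ r = 𝟙 _ := by
    rw [← cancel_mono i', Category.assoc, hr]; simp [hm2, reassoc_of% hm1]
  refine isPushout_of_exists w1 ?_ ?_
  · intro T u v huv
    obtain ⟨l, hl⟩ := kq.desc (p ≫ u + r ≫ v) (by
      rw [Preadditive.comp_add, ← Category.assoc, ← hs, ← Category.assoc i'' r, hsr]
      simp [huv])
    refine ⟨l, ?_, ?_⟩
    · rw [← hk2, Category.assoc, hl]; simp [reassoc_of% hk1, reassoc_of% hkr]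
    · rw [← hm2, Category.assoc, hl]; simp [reassoc_of% hm1, reassoc_of% hmr]
  · intro T l l' h1 h2
    have e : q = r ≫ i' + p ≫ g := by rw [hr]; simp
    rw [← cancel_epi q, e]
    simp [h1, h2]

/-- A morphism of pairs which is the identity on the left is a pullback. -/
lemma isPullback_of_mor (𝒲 : WeaklyExactStructure C) {A B Z B' Z' : C} {i : A ⟶ B} {d : B ⟶ Z}
    {i' : A ⟶ B'} {d' : B' ⟶ Z'} (h : 𝒲.W i' d') (h' : IsKernelCokernelPair i d)
    {c : Z ⟶ Z'} {g : B ⟶ B'} (w1 : i ≫ g = i') (w2 : g ≫ d' = d ≫ c) :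
    IsPullback g d d' c := by
  obtain ⟨P, p, q, hP, A'', i'', hq⟩ := 𝒲.pushout_mem h i
  have kq := 𝒲.kc_of_mem hq
  have kd := 𝒲.kc_of_mem h
  have := h'.epi
  have := kq.mono
  -- p : B' ⟶ P, q : B ⟶ P
  obtain ⟨k, hk1, hk2⟩ : ∃ k : P ⟶ B', p ≫ k = 𝟙 B' ∧ q ≫ k = g :=
    ⟨hP.desc (𝟙 B') g (by simp [w1]), by simp, by simp⟩
  obtain ⟨m, hm1, hm2⟩ : ∃ m : P ⟶ Z, p ≫ m = 0 ∧ q ≫ m = d :=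
    ⟨hP.desc 0 d (by simp [h'.w]), by simp, by simp⟩
  obtain ⟨r, hr⟩ := h'.desc (q - g ≫ p) (by simp [reassoc_of% w1, hP.w])
  obtain ⟨s, hs⟩ := kd.desc (p ≫ i'') (by rw [← Category.assoc, hP.w, Category.assoc, kq.w, comp_zero])
  have hsr : r ≫ i'' = - (c ≫ s) := by
    rw [← cancel_epi d, ← Category.assoc, hr, Preadditive.sub_comp, kq.w, Category.assoc, ← hs]
    simp [reassoc_of% w2]
  have hkr : r ≫ k = 0 := by
    rw [← cancel_epi d, ← Category.assoc, hr]; simp [hk2, hk1]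
  have hmr : r ≫ m = 𝟙 _ := by
    rw [← cancel_epi d, ← Category.assoc, hr]; simp [hm2, hm1]
  refine isPullback_of_exists w2 ?_ ?_
  · intro T u v huv
    obtain ⟨l, hl⟩ := kq.lift (u ≫ p + v ≫ r) (by
      rw [Preadditive.add_comp, Category.assoc, ← hs, Category.assoc v r, hsr]
      simp [reassoc_of% huv])
    refine ⟨l, ?_, ?_⟩
    · rw [← hk2, ← Category.assoc, hl]; simp [hk1, hkr]
    · rw [← hm2, ← Category.assoc, hl]; simp [hm1, hmr]
  · intro T l l' h1 h2
    have e : q = d ≫ r + g ≫ p := by rw [hr]; simp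
    rw [← cancel_mono q, e]
    simp [reassoc_of% h1, reassoc_of% h2]

/-- Given a pushout square, the induced pair lies in the structure. -/
lemma mem_of_isPushout (𝒲 : WeaklyExactStructure C) {A B Z A' B' : C} {i : A ⟶ B} {d : B ⟶ Z}
    {i' : A' ⟶ B'} {d' : B' ⟶ Z} (h : 𝒲.W i d)
    {t : A ⟶ A'} {g : B ⟶ B'} (sq : IsPushout i t g i') (w2 : g ≫ d' = d) (w3 : i' ≫ d' = 0) :
    𝒲.W i' d' := by
  obtain ⟨S, g₀, i₀, hS, Z₀, d₀, h₀⟩ := 𝒲.pushout_mem h t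
  have k₀ := 𝒲.kc_of_mem h₀
  have kd := 𝒲.kc_of_mem h
  have := k₀.epi
  have := kd.epi
  let e : S ≅ B' := hS.isoIsPushout _ _ sq
  have e1 : g₀ ≫ e.hom = g := by simp [e]
  have e2 : i₀ ≫ e.hom = i' := by simp [e]
  obtain ⟨x, hx⟩ := k₀.desc (e.hom ≫ d') (by rw [← Category.assoc, e2, w3])
  obtain ⟨y, hy⟩ := kd.desc (g₀ ≫ d₀) (by rw [← Category.assoc, hS.w, Category.assoc, k₀.w, comp_zero])
  have hdx : d ≫ y ≫ x = d := by
    rw [reassoc_of% hy, hx, reassoc_of% e1, w2]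
  have hyx : y ≫ x = 𝟙 _ := by
    rw [← cancel_epi d, hdx, Category.comp_id]
  have hxy : x ≫ y = 𝟙 _ := by
    rw [← cancel_epi d₀]
    apply hS.hom_ext
    · rw [reassoc_of% hx, reassoc_of% e1, reassoc_of% w2, hy, Category.comp_id]
    · rw [reassoc_of% hx, reassoc_of% e2, reassoc_of% w3, Category.comp_id, k₀.w, zero_comp]
  exact 𝒲.iso_closed h₀ ⟨Iso.refl _, e, ⟨x, y, hxy, hyx⟩, by simp [e2], hx⟩

/-- Given a pullback square, the induced pair lies in the structure. -/
lemma mem_of_isPullback (𝒲 : WeaklyExactStructure C) {A B Z B' Z' : C} {i : A ⟶ B} {d : B ⟶ Z}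
    {i' : A ⟶ B'} {d' : B' ⟶ Z'} (h : 𝒲.W i' d')
    {c : Z ⟶ Z'} {g : B ⟶ B'} (sq : IsPullback g d d' c) (w2 : i ≫ g = i') (w3 : i ≫ d = 0) :
    𝒲.W i d := by
  obtain ⟨S, g₀, d₀, hS, A₀, i₀, h₀⟩ := 𝒲.pullback_mem h c
  have k₀ := 𝒲.kc_of_mem h₀
  have kd := 𝒲.kc_of_mem h
  have := k₀.mono
  have := kd.mono
  let e : B ≅ S := sq.isoIsPullback _ _ hS
  have e1 : e.hom ≫ g₀ = g := by simp [e]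
  have e2 : e.hom ≫ d₀ = d := by simp [e]
  obtain ⟨x, hx⟩ := k₀.lift (i ≫ e.hom) (by rw [Category.assoc, e2, w3])
  obtain ⟨y, hy⟩ := kd.lift (i₀ ≫ g₀) (by rw [Category.assoc, hS.w, reassoc_of% k₀.w, zero_comp])
  have hxy : x ≫ y = 𝟙 _ := by
    rw [← cancel_mono i', Category.assoc, hy, reassoc_of% hx, e1, w2, Category.id_comp]
  have hyx : y ≫ x = 𝟙 _ := by
    rw [← cancel_mono i₀]
    apply hS.hom_ext
    · simp only [Category.assoc, Category.id_comp]
      rw [reassoc_of% hx, e1, w2, hy]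
    · simp only [Category.assoc, Category.id_comp]
      rw [reassoc_of% hx, e2, w3, k₀.w, comp_zero]
  exact 𝒲.iso_closed h₀ ⟨⟨y, x, hyx, hxy⟩, e.symm, Iso.refl _,
    by rw [← cancel_mono e.hom]; simp [← hx, reassoc_of% hyx], by simp [← e2]⟩

lemma exists_pushout (𝒲 : WeaklyExactStructure C) {A B Z A' : C} {i : A ⟶ B} {d : B ⟶ Z}
    (h : 𝒲.W i d) (t : A ⟶ A') : ∃ (S : C) (g : B ⟶ S) (i' : A' ⟶ S) (d' : S ⟶ Z),
      𝒲.W i' d' ∧ i ≫ g = t ≫ i' ∧ g ≫ d' = d := by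
  obtain ⟨S, g, i', hS, -⟩ := 𝒲.pushout_mem h t
  have w : i ≫ d = t ≫ (0 : A' ⟶ Z) := by simp [(𝒲.kc_of_mem h).w]
  exact ⟨S, g, i', hS.desc d 0 w,
    mem_of_isPushout 𝒲 h hS (by simp) (by simp), hS.w, by simp⟩

lemma exists_pullback (𝒲 : WeaklyExactStructure C) {A B Z Z' : C} {i : A ⟶ B} {d : B ⟶ Z}
    (h : 𝒲.W i d) (t : Z' ⟶ Z) : ∃ (S : C) (g : S ⟶ B) (i' : A ⟶ S) (d' : S ⟶ Z'),
      𝒲.W i' d' ∧ i' ≫ g = i ∧ g ≫ d = d' ≫ t := by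
  obtain ⟨S, g, d', hS, -⟩ := 𝒲.pullback_mem h t
  have w : i ≫ d = (0 : A ⟶ Z') ≫ t := by simp [(𝒲.kc_of_mem h).w]
  exact ⟨S, g, hS.lift i 0 w, d',
    mem_of_isPullback 𝒲 h hS (by simp) (by simp), by simp, hS.w⟩

lemma split_mem (𝒲 : WeaklyExactStructure C) (A Z : C) :
    𝒲.W (biprod.inl : A ⟶ A ⊞ Z) (biprod.snd : A ⊞ Z ⟶ Z) := by
  refine 𝒲.iso_closed (𝒲.sum_mem (𝒲.id_zero_mem A) (𝒲.zero_id_mem Z))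
    ⟨⟨biprod.fst, biprod.inl, ?_, ?_⟩, Iso.refl _, ⟨biprod.snd, biprod.inr, ?_, ?_⟩, ?_, ?_⟩
  · apply biprod.hom_ext
    · simp
    · exact (isZero_zero C).eq_of_tgt _ _
  · simp
  · apply biprod.hom_ext
    · exact (isZero_zero C).eq_of_tgt _ _
    · simp
  · simp
  · apply biprod.hom_ext <;> simp
  · simp

/-- `(i, d)` is a Baer sum of `(i₁, d₁)` and `(i₂, d₂)` inside `𝒱`. -/
def BS (𝒱 : WeaklyExactStructure C) {A Z B₁ B₂ S : C} (i₁ : A ⟶ B₁) (d₁ : B₁ ⟶ Z)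
    (i₂ : A ⟶ B₂) (d₂ : B₂ ⟶ Z) (i : A ⟶ S) (d : S ⟶ Z) : Prop :=
  𝒱.W i₁ d₁ ∧ 𝒱.W i₂ d₂ ∧ 𝒱.W i d ∧
    ∃ (P : C) (p : P ⟶ B₁ ⊞ B₂) (dP : P ⟶ Z) (iP : A ⊞ A ⟶ P) (g : P ⟶ S),
      𝒱.W iP dP ∧ iP ≫ p = biprod.map i₁ i₂ ∧
      p ≫ biprod.map d₁ d₂ = dP ≫ biprod.lift (𝟙 Z) (𝟙 Z) ∧
      iP ≫ g = biprod.desc (𝟙 A) (𝟙 A) ≫ i ∧ g ≫ d = dP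

lemma BS.exists (𝒱 : WeaklyExactStructure C) {A Z B₁ B₂ : C} {i₁ : A ⟶ B₁} {d₁ : B₁ ⟶ Z}
    {i₂ : A ⟶ B₂} {d₂ : B₂ ⟶ Z} (h₁ : 𝒱.W i₁ d₁) (h₂ : 𝒱.W i₂ d₂) :
    ∃ (S : C) (i : A ⟶ S) (d : S ⟶ Z), BS 𝒱 i₁ d₁ i₂ d₂ i d := by
  obtain ⟨P, p, iP, dP, hP, e1, e2⟩ :=
    exists_pullback 𝒱 (𝒱.sum_mem h₁ h₂) (biprod.lift (𝟙 Z) (𝟙 Z))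
  obtain ⟨S, g, i, d, h, e3, e4⟩ := exists_pushout 𝒱 hP (biprod.desc (𝟙 A) (𝟙 A))
  exact ⟨S, i, d, h₁, h₂, h, P, p, dP, iP, g, hP, e1, e2, e3, e4⟩

lemma BS.transfer {𝒱 : WeaklyExactStructure C} {A Z B₁ B₂ S S' : C} {i₁ : A ⟶ B₁} {d₁ : B₁ ⟶ Z}
    {i₂ : A ⟶ B₂} {d₂ : B₂ ⟶ Z} {i : A ⟶ S} {d : S ⟶ Z} {i' : A ⟶ S'} {d' : S' ⟶ Z}
    (h : BS 𝒱 i₁ d₁ i₂ d₂ i d) (h' : 𝒱.W i' d') (b : S ⟶ S') (e1 : i ≫ b = i')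
    (e2 : b ≫ d' = d) : BS 𝒱 i₁ d₁ i₂ d₂ i' d' := by
  obtain ⟨h₁, h₂, h, P, p, dP, iP, g, hP, e3, e4, e5, e6⟩ := h
  exact ⟨h₁, h₂, h', P, p, dP, iP, g ≫ b, hP, e3, e4,
    by rw [reassoc_of% e5, e1], by rw [Category.assoc, e2, e6]⟩

lemma BS.map {𝒱 : WeaklyExactStructure C} {A Z B₁ B₂ S A' Z' B₁' B₂' S' : C}
    {i₁ : A ⟶ B₁} {d₁ : B₁ ⟶ Z} {i₂ : A ⟶ B₂} {d₂ : B₂ ⟶ Z} {i : A ⟶ S} {d : S ⟶ Z}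
    {i₁' : A' ⟶ B₁'} {d₁' : B₁' ⟶ Z'} {i₂' : A' ⟶ B₂'} {d₂' : B₂' ⟶ Z'} {i' : A' ⟶ S'}
    {d' : S' ⟶ Z'}
    (h : BS 𝒱 i₁ d₁ i₂ d₂ i d) (h' : BS 𝒱 i₁' d₁' i₂' d₂' i' d')
    (a : A ⟶ A') (b₁ : B₁ ⟶ B₁') (b₂ : B₂ ⟶ B₂') (c : Z ⟶ Z')
    (u₁ : i₁ ≫ b₁ = a ≫ i₁') (v₁ : b₁ ≫ d₁' = d₁ ≫ c)
    (u₂ : i₂ ≫ b₂ = a ≫ i₂') (v₂ : b₂ ≫ d₂' = d₂ ≫ c) :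
    ∃ b : S ⟶ S', i ≫ b = a ≫ i' ∧ b ≫ d' = d ≫ c := by
  obtain ⟨h₁, h₂, h, P, p, dP, iP, g, hP, e3, e4, e5, e6⟩ := h
  obtain ⟨h₁', h₂', h', P', p', dP', iP', g', hP', e3', e4', e5', e6'⟩ := h'
  have sq' := isPullback_of_mor 𝒱 (𝒱.sum_mem h₁' h₂') (𝒱.kc_of_mem hP') e3' e4'
  have sq := isPushout_of_mor 𝒱 hP (𝒱.kc_of_mem h) e5 e6
  have wP := (𝒱.kc_of_mem hP).w
  have wP' := (𝒱.kc_of_mem hP').w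
  have w' := (𝒱.kc_of_mem h').w
  have w := (𝒱.kc_of_mem h).w
  obtain ⟨k, hk1, hk2⟩ : ∃ k : P ⟶ P', k ≫ p' = p ≫ biprod.map b₁ b₂ ∧ k ≫ dP' = dP ≫ c := by
    have : (p ≫ biprod.map b₁ b₂) ≫ biprod.map d₁' d₂' =
        (dP ≫ c) ≫ biprod.lift (𝟙 Z') (𝟙 Z') := by
      have t1 : biprod.map b₁ b₂ ≫ biprod.map d₁' d₂' = biprod.map d₁ d₂ ≫ biprod.map c c := by
        apply biprod.hom_ext <;> simp [v₁, v₂]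
      rw [Category.assoc, t1, reassoc_of% e4]
      apply biprod.hom_ext <;> simp
    exact ⟨sq'.lift _ _ this, by simp, by simp⟩
  have hk3 : iP ≫ k = biprod.map a a ≫ iP' := by
    apply sq'.hom_ext
    · rw [Category.assoc, hk1, reassoc_of% e3, Category.assoc, e3']
      apply biprod.hom_ext <;> simp [u₁, u₂]
    · rw [Category.assoc, hk2, reassoc_of% wP, Category.assoc, wP']
      simp
  have w3 : iP ≫ k ≫ g' = biprod.desc (𝟙 A) (𝟙 A) ≫ a ≫ i' := by
    rw [reassoc_of% hk3, e5']
    apply biprod.hom_ext' <;> simp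
  refine ⟨sq.desc _ _ w3, by simp, ?_⟩
  apply sq.hom_ext
  · simp [e6', hk2, reassoc_of% e6]
  · simp [w', reassoc_of% w]

/-- Membership in the sum of two structures. -/
def SumMem (𝒱 𝒲₁ 𝒲₂ : WeaklyExactStructure C) ⦃A S Z : C⦄ (i : A ⟶ S) (d : S ⟶ Z) : Prop :=
  ∃ (B₁ B₂ : C) (i₁ : A ⟶ B₁) (d₁ : B₁ ⟶ Z) (i₂ : A ⟶ B₂) (d₂ : B₂ ⟶ Z),
    𝒲₁.W i₁ d₁ ∧ 𝒲₂.W i₂ d₂ ∧ BS 𝒱 i₁ d₁ i₂ d₂ i d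

lemma SumMem.iso {𝒱 𝒲₁ 𝒲₂ : WeaklyExactStructure C}
    (h₁ : ∀ {A B Z : C} (i : A ⟶ B) (d : B ⟶ Z), 𝒲₁.W i d → 𝒱.W i d)
    (h₂ : ∀ {A B Z : C} (i : A ⟶ B) (d : B ⟶ Z), 𝒲₂.W i d → 𝒱.W i d)
    {A B Z A' B' Z' : C} {i : A ⟶ B} {d : B ⟶ Z} {i' : A' ⟶ B'} {d' : B' ⟶ Z'}
    (h : SumMem 𝒱 𝒲₁ 𝒲₂ i d) (e : PairIso i d i' d') : SumMem 𝒱 𝒲₁ 𝒲₂ i' d' := by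
  obtain ⟨B₁, B₂, i₁, d₁, i₂, d₂, m₁, m₂, hB⟩ := h
  have hV := 𝒱.iso_closed hB.2.2.1 e
  obtain ⟨eA, eB, eZ, x1, x2⟩ := e
  have m₁' : 𝒲₁.W (eA.inv ≫ i₁) (d₁ ≫ eZ.hom) :=
    𝒲₁.iso_closed m₁ ⟨eA, Iso.refl _, eZ, by simp, by simp⟩
  have m₂' : 𝒲₂.W (eA.inv ≫ i₂) (d₂ ≫ eZ.hom) :=
    𝒲₂.iso_closed m₂ ⟨eA, Iso.refl _, eZ, by simp, by simp⟩
  obtain ⟨S, j, f, hS⟩ := BS.exists 𝒱 (h₁ _ _ m₁') (h₂ _ _ m₂')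
  obtain ⟨b, y1, y2⟩ := hS.map hB eA.inv (𝟙 _) (𝟙 _) eZ.inv (by simp) (by simp) (by simp) (by simp)
  refine ⟨_, _, _, _, _, _, m₁', m₂', hS.transfer hV (b ≫ eB.hom) ?_ ?_⟩
  · rw [reassoc_of% y1, x1]; simp
  · rw [Category.assoc, ← x2, reassoc_of% y2]; simp

lemma SumMem.of_left {𝒱 𝒲₁ 𝒲₂ : WeaklyExactStructure C}
    (h₁ : ∀ {A B Z : C} (i : A ⟶ B) (d : B ⟶ Z), 𝒲₁.W i d → 𝒱.W i d)
    {A B Z : C} {i : A ⟶ B} {d : B ⟶ Z} (h : 𝒲₁.W i d) : SumMem 𝒱 𝒲₁ 𝒲₂ i d := by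
  refine ⟨_, _, _, _, _, _, h, split_mem 𝒲₂ A Z, h₁ _ _ h, split_mem 𝒱 A Z, h₁ _ _ h, ?_⟩
  obtain ⟨P, p, iP, dP, hP, e1, e2⟩ :=
    exists_pullback 𝒱 (𝒱.sum_mem (h₁ _ _ h) (split_mem 𝒱 A Z)) (biprod.lift (𝟙 Z) (𝟙 Z))
  refine ⟨P, p, dP, iP, p ≫ biprod.desc (𝟙 B) (biprod.fst ≫ i), hP, e1, e2, ?_, ?_⟩
  · rw [reassoc_of% e1]
    apply biprod.hom_ext' <;> simp
  · have e3 := e2 =≫ biprod.fst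
    simp only [Category.assoc, biprod.map_fst, biprod.lift_fst, Category.comp_id] at e3
    rw [← e3, Category.assoc]
    congr 1
    apply biprod.hom_ext' <;> simp [(𝒲₁.kc_of_mem h).w]

lemma SumMem.of_right {𝒱 𝒲₁ 𝒲₂ : WeaklyExactStructure C}
    (h₂ : ∀ {A B Z : C} (i : A ⟶ B) (d : B ⟶ Z), 𝒲₂.W i d → 𝒱.W i d)
    {A B Z : C} {i : A ⟶ B} {d : B ⟶ Z} (h : 𝒲₂.W i d) : SumMem 𝒱 𝒲₁ 𝒲₂ i d := by
  refine ⟨_, _, _, _, _, _, split_mem 𝒲₁ A Z, h, split_mem 𝒱 A Z, h₂ _ _ h, h₂ _ _ h, ?_⟩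
  obtain ⟨P, p, iP, dP, hP, e1, e2⟩ :=
    exists_pullback 𝒱 (𝒱.sum_mem (split_mem 𝒱 A Z) (h₂ _ _ h)) (biprod.lift (𝟙 Z) (𝟙 Z))
  refine ⟨P, p, dP, iP, p ≫ biprod.desc (biprod.fst ≫ i) (𝟙 B), hP, e1, e2, ?_, ?_⟩
  · rw [reassoc_of% e1]
    apply biprod.hom_ext' <;> simp
  · have e3 := e2 =≫ biprod.snd
    simp only [Category.assoc, biprod.map_snd, biprod.lift_snd, Category.comp_id] at e3
    rw [← e3, Category.assoc]
    congr 1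
    apply biprod.hom_ext' <;> simp [(𝒲₂.kc_of_mem h).w]

/-- The sum of two weakly exact structures inside `𝒱`. -/
def sumStructure (𝒱 𝒲₁ 𝒲₂ : WeaklyExactStructure C)
    (h₁ : ∀ {A B Z : C} (i : A ⟶ B) (d : B ⟶ Z), 𝒲₁.W i d → 𝒱.W i d)
    (h₂ : ∀ {A B Z : C} (i : A ⟶ B) (d : B ⟶ Z), 𝒲₂.W i d → 𝒱.W i d) :
    WeaklyExactStructure C where
  W := SumMem 𝒱 𝒲₁ 𝒲₂
  kc_of_mem := by
    rintro A B Z i d ⟨_, _, _, _, _, _, _, _, _, _, h, _⟩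
    exact 𝒱.kc_of_mem h
  iso_closed := fun h e => h.iso h₁ h₂ e
  sum_mem := by
    rintro A₁ S₁ Z₁ A₂ S₂ Z₂ i d i' d' ⟨B₁, B₂, i₁, d₁, i₂, d₂, m₁, m₂, hB⟩
      ⟨B₁', B₂', i₁', d₁', i₂', d₂', m₁', m₂', hB'⟩
    have n₁ := 𝒲₁.sum_mem m₁ m₁'
    have n₂ := 𝒲₂.sum_mem m₂ m₂'
    obtain ⟨S, j, f, hS⟩ := BS.exists 𝒱 (h₁ _ _ n₁) (h₂ _ _ n₂)
    obtain ⟨b, y1, y2⟩ := hS.map hB biprod.fst biprod.fst biprod.fst biprod.fst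
      (by simp) (by simp) (by simp) (by simp)
    obtain ⟨b', y1', y2'⟩ := hS.map hB' biprod.snd biprod.snd biprod.snd biprod.snd
      (by simp) (by simp) (by simp) (by simp)
    refine ⟨_, _, _, _, _, _, n₁, n₂, hS.transfer (𝒱.sum_mem hB.2.2.1 hB'.2.2.1)
      (biprod.lift b b') ?_ ?_⟩
    · apply biprod.hom_ext <;> simp [y1, y1']
    · apply biprod.hom_ext <;> simp [y2, y2']
  id_zero_mem := fun X => SumMem.of_left h₁ (𝒲₁.id_zero_mem X)
  zero_id_mem := fun X => SumMem.of_left h₁ (𝒲₁.zero_id_mem X)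
  pushout_mem := by
    rintro A B Z A' i d ⟨B₁, B₂, i₁, d₁, i₂, d₂, m₁, m₂, hB⟩ t
    obtain ⟨S₁, g₁, j₁, f₁, n₁, x₁, y₁⟩ := exists_pushout 𝒲₁ m₁ t
    obtain ⟨S₂, g₂, j₂, f₂, n₂, x₂, y₂⟩ := exists_pushout 𝒲₂ m₂ t
    obtain ⟨S, j, f, hS⟩ := BS.exists 𝒱 (h₁ _ _ n₁) (h₂ _ _ n₂)
    obtain ⟨b, z1, z2⟩ := hB.map hS t g₁ g₂ (𝟙 Z) x₁ (by simp [y₁]) x₂ (by simp [y₂])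
    exact ⟨S, b, j, isPushout_of_mor 𝒱 hB.2.2.1 (𝒱.kc_of_mem hS.2.2.1) z1 (by simpa using z2),
      Z, f, _, _, _, _, _, _, n₁, n₂, hS⟩
  pullback_mem := by
    rintro A B Z D i d ⟨B₁, B₂, i₁, d₁, i₂, d₂, m₁, m₂, hB⟩ t
    obtain ⟨S₁, g₁, j₁, f₁, n₁, x₁, y₁⟩ := exists_pullback 𝒲₁ m₁ t
    obtain ⟨S₂, g₂, j₂, f₂, n₂, x₂, y₂⟩ := exists_pullback 𝒲₂ m₂ t
    obtain ⟨S, j, f, hS⟩ := BS.exists 𝒱 (h₁ _ _ n₁) (h₂ _ _ n₂)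
    obtain ⟨b, z1, z2⟩ := hS.map hB (𝟙 A) g₁ g₂ t (by simp [x₁]) y₁ (by simp [x₂]) y₂
    exact ⟨S, b, f, isPullback_of_mor 𝒱 hB.2.2.1 (𝒱.kc_of_mem hS.2.2.1) (by simpa using z1) z2,
      A, j, _, _, _, _, _, _, n₁, n₂, hS⟩

/-- A Baer sum lies in every structure containing both summands. -/
lemma mem_of_isBaerSum {𝒰 𝒲₁ 𝒲₂ : WeaklyExactStructure C}
    (h₁ : ∀ {A B Z : C} (i : A ⟶ B) (d : B ⟶ Z), 𝒲₁.W i d → 𝒰.W i d)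
    (h₂ : ∀ {A B Z : C} (i : A ⟶ B) (d : B ⟶ Z), 𝒲₂.W i d → 𝒰.W i d)
    {A S Z : C} {i : A ⟶ S} {d : S ⟶ Z} (h : IsBaerSum 𝒲₁ 𝒲₂ i d) : SumMem 𝒰 𝒲₁ 𝒲₂ i d := by
  obtain ⟨B₁, B₂, i₁, d₁, i₂, d₂, m₁, m₂, P, p, dP, iP, g, sq, e1, e2, sq', e3, e4⟩ := h
  have hP := mem_of_isPullback 𝒰 (𝒰.sum_mem (h₁ _ _ m₁) (h₂ _ _ m₂)) sq e1 e2
  have hS := mem_of_isPushout 𝒰 hP sq' e3 e4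
  exact ⟨_, _, _, _, _, _, m₁, m₂, h₁ _ _ m₁, h₂ _ _ m₂, hS, P, p, dP, iP, g, hP, e1, sq.w,
    sq'.w, e3⟩

lemma SumMem.isBaerSum {𝒱 𝒲₁ 𝒲₂ : WeaklyExactStructure C}
    {A S Z : C} {i : A ⟶ S} {d : S ⟶ Z} (h : SumMem 𝒱 𝒲₁ 𝒲₂ i d) : IsBaerSum 𝒲₁ 𝒲₂ i d := by
  obtain ⟨B₁, B₂, i₁, d₁, i₂, d₂, m₁, m₂, h₁, h₂, h, P, p, dP, iP, g, hP, e3, e4, e5, e6⟩ := h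
  exact ⟨_, _, _, _, _, _, m₁, m₂, P, p, dP, iP, g,
    isPullback_of_mor 𝒱 (𝒱.sum_mem h₁ h₂) (𝒱.kc_of_mem hP) e3 e4, e3, (𝒱.kc_of_mem hP).w,
    isPushout_of_mor 𝒱 hP (𝒱.kc_of_mem h) e5 e6, e6, (𝒱.kc_of_mem h).w⟩

end Helpers

/-- For weakly exact structures `𝒲₁, 𝒲₂` contained in a weakly exact structure `𝒱`, the
class `𝒲₁ + 𝒲₂` of kernel–cokernel pairs isomorphic to Baer sums of a pair of `𝒲₁` and a
pair of `𝒲₂` is a weakly exact structure, and it is the join of `𝒲₁` and `𝒲₂`. -/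
theorem statement12 (𝒱 𝒲₁ 𝒲₂ : WeaklyExactStructure C)
    (h₁ : ∀ {A B Z : C} (i : A ⟶ B) (d : B ⟶ Z), 𝒲₁.W i d → 𝒱.W i d)
    (h₂ : ∀ {A B Z : C} (i : A ⟶ B) (d : B ⟶ Z), 𝒲₂.W i d → 𝒱.W i d) :
    ∃ 𝒲 : WeaklyExactStructure C,
      (∀ {A B Z : C} (i : A ⟶ B) (d : B ⟶ Z), 𝒲.W i d ↔
        (IsKernelCokernelPair i d ∧
          ∃ (A' S' Z' : C) (i₃ : A' ⟶ S') (d₃ : S' ⟶ Z'),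
            IsBaerSum 𝒲₁ 𝒲₂ i₃ d₃ ∧ PairIso i₃ d₃ i d)) ∧
      (∀ {A B Z : C} (i : A ⟶ B) (d : B ⟶ Z), 𝒲₁.W i d → 𝒲.W i d) ∧
      (∀ {A B Z : C} (i : A ⟶ B) (d : B ⟶ Z), 𝒲₂.W i d → 𝒲.W i d) ∧
      (∀ 𝒰 : WeaklyExactStructure C,
        (∀ {A B Z : C} (i : A ⟶ B) (d : B ⟶ Z), 𝒲₁.W i d → 𝒰.W i d) →
        (∀ {A B Z : C} (i : A ⟶ B) (d : B ⟶ Z), 𝒲₂.W i d → 𝒰.W i d) →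
        ∀ {A B Z : C} (i : A ⟶ B) (d : B ⟶ Z), 𝒲.W i d → 𝒰.W i d) := by
  refine ⟨sumStructure 𝒱 𝒲₁ 𝒲₂ h₁ h₂, ?_, ?_, ?_, ?_⟩
  · intro A B Z i d
    constructor
    · intro h
      exact ⟨(sumStructure 𝒱 𝒲₁ 𝒲₂ h₁ h₂).kc_of_mem h, _, _, _, i, d, SumMem.isBaerSum h,
        Iso.refl _, Iso.refl _, Iso.refl _, by simp, by simp⟩
    · rintro ⟨-, A', S', Z', i₃, d₃, h, e⟩
      exact (mem_of_isBaerSum h₁ h₂ h).iso h₁ h₂ e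
  · intro A B Z i d h
    exact SumMem.of_left h₁ h
  · intro A B Z i d h
    exact SumMem.of_right h₂ h
  · intro 𝒰 u₁ u₂ A B Z i d h
    obtain ⟨_, _, _, _, _, _, _, _, _, _, h, _⟩ := mem_of_isBaerSum u₁ u₂ (SumMem.isBaerSum h)
    exact h

end Statement

end WeaklyExactPaper
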